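/- arXiv:1703.05531 — 3 statements merged into one kernel-verified Lean document; each statement's English description precedes it below -/
import Mathlib

section
/- Let A be a finite (u×v with u,v ∈ ℕ) image partition regular matrix with rational entries and let B be an infinite (ω×ω) image partition regular matrix with rational entries, each row of B having only finitely many nonzero entries. Then the diagonal sum ( A 0 ; 0 B ) is image partition regular: whenever ℕ is partitioned into finitely many classes, there exist x ∈ ℕ^v and y ∈ ℕ^ω such that all entries of Ax and all entries of By lie in one and the same class. -/
/- `ℕ+` plays the role of the paper's `ℕ = {1,2,3,…}`.  `Ultrafilter ℕ+` is `βℕ`. -/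

/-- Product of ultrafilters: `U ∈ umul p q ↔ {x | {y | x*y ∈ U} ∈ q} ∈ p`. -/
def umul (p q : Ultrafilter ℕ+) : Ultrafilter ℕ+ :=
  p.bind fun x => q.map fun y => x * y

/-- Sum of ultrafilters: `U ∈ uadd p q ↔ {x | {y | x+y ∈ U} ∈ q} ∈ p`. -/
def uadd (p q : Ultrafilter ℕ+) : Ultrafilter ℕ+ :=
  p.bind fun x => q.map fun y => x + y

/-- The matrix-vector product `Ax` (computed in `ℚ`) of a row-finite matrix `A`
with a vector `x` of positive integers. -/
noncomputable def mulVecQ {ι κ : Type} (A : ι → κ → ℚ) (x : κ → ℕ+) : ι → ℚ :=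
  fun i => ∑ᶠ j, A i j * ((x j : ℕ) : ℚ)

/-- All entries of the vector `y` are (positive) natural numbers lying in `P`. -/
def entriesIn {ι : Type} (y : ι → ℚ) (P : Set ℕ+) : Prop :=
  ∀ i, ∃ n ∈ P, y i = ((n : ℕ) : ℚ)

/-- `A` is image partition regular: for every finite coloring of `ℕ` there is
a vector `x` over `ℕ` all entries of whose image `Ax` are monochromatic. -/
def IPR {ι κ : Type} (A : ι → κ → ℚ) : Prop :=
  ∀ (r : ℕ) (c : ℕ+ → Fin r), ∃ (k : Fin r) (x : κ → ℕ+),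
    entriesIn (mulVecQ A x) {n | c n = k}

/-- `I(A) = {p ∈ βℕ : for every P ∈ p there is x over ℕ with all entries of Ax in P}`. -/
def ISet {ι κ : Type} (A : ι → κ → ℚ) : Set (Ultrafilter ℕ+) :=
  {p | ∀ P ∈ p, ∃ x : κ → ℕ+, entriesIn (mulVecQ A x) P}

theorem mulVecQ_scale {ι κ : Type} (A : ι → κ → ℚ) (a : ℕ+) (x : κ → ℕ+) (i : ι) :
    mulVecQ A (fun j => a * x j) i = ((a : ℕ) : ℚ) * mulVecQ A x i := by
  unfold mulVecQ
  rw [← smul_eq_mul, smul_finsum]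
  refine finsum_congr fun j => ?_
  rw [PNat.mul_coe, smul_eq_mul]
  push_cast
  ring

/-- An image partition regular matrix with at least one row has a witnessing ultrafilter. -/
theorem exists_mem_ISet {ι κ : Type} [Nonempty ι] (B : ι → κ → ℚ) (hB : IPR B) :
    ∃ q, q ∈ ISet B := by
  classical
  obtain ⟨q, hq⟩ := Ultrafilter.exists_ultrafilter_of_finite_inter_nonempty
    {P : Set ℕ+ | ¬ ∃ x : κ → ℕ+, entriesIn (mulVecQ B x) Pᶜ} (by
      intro T hT
      by_contra hne
      let e := Fintype.equivFin (T → Bool)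
      obtain ⟨k, x, hx⟩ := hB _ (fun n => e (fun P => decide (n ∈ P.1)))
      obtain ⟨i₀⟩ := ‹Nonempty ι›
      obtain ⟨n, hn, -⟩ := hx i₀
      have h1 : ∃ P ∈ T, n ∉ P := by
        by_contra h
        push Not at h
        exact hne ⟨n, fun P hP => h P hP⟩
      obtain ⟨P, hP, hnP⟩ := h1
      refine hT hP ⟨x, fun i => ?_⟩
      obtain ⟨m, hm, hmi⟩ := hx i
      refine ⟨m, ?_, hmi⟩
      have h2 := congrFun (e.injective (hm.trans hn.symm)) ⟨P, hP⟩
      intro hmP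
      simp [hmP, hnP] at h2)
  refine ⟨q, fun P hP => ?_⟩
  by_contra h
  have h3 : Pᶜ ∈ q := hq (by simpa using h)
  exact Ultrafilter.compl_mem_iff_notMem.1 h3 hP

/-- Theorem 2.4: if `A` is a finite image partition regular matrix
and `B` is an infinite (`ω×ω`, row-finite) image partition regular matrix, then the
diagonal sum `(A 0; 0 B)` is image partition regular: for every finite coloring of
`ℕ` there are `x ∈ ℕ^v`, `y ∈ ℕ^ω` with all entries of `Ax` and of `By` in one
and the same color class. -/
theorem stmt_2 {u v : ℕ} (A : Fin u → Fin v → ℚ) (B : ℕ → ℕ → ℚ)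
    (hBrow : ∀ i, {j | B i j ≠ 0}.Finite)
    (hA : IPR A) (hB : IPR B) :
    ∀ (r : ℕ) (c : ℕ+ → Fin r), ∃ (k : Fin r) (x : Fin v → ℕ+) (y : ℕ → ℕ+),
      entriesIn (mulVecQ A x) {n | c n = k} ∧
      entriesIn (mulVecQ B y) {n | c n = k} := by
  classical
  intro r c
  obtain ⟨q, hq⟩ := exists_mem_ISet B hB
  have hd : ∀ m : ℕ+, ∃ k, ∀ᶠ b in (q : Filter ℕ+), c (m * b) = k := by
    intro m
    have h := (Ultrafilter.eventually_exists_iff (f := q)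
      (P := fun k b => c (m * b) = k)).1 (Filter.Eventually.of_forall fun b => ⟨_, rfl⟩)
    exact h
  choose d hd using hd
  obtain ⟨k, x, hx⟩ := hA r d
  choose m hm hmx using hx
  rcases Nat.eq_zero_or_pos u with rfl | hu
  · obtain ⟨k, y, hy⟩ := hB r c
    exact ⟨k, x, y, fun i => i.elim0, hy⟩
  have hall : ∀ᶠ b in (q : Filter ℕ+), ∀ i, c (m i * b) = k := by
    rw [Filter.eventually_all]
    intro i
    have h := hd (m i)
    rwa [show d (m i) = k from hm i] at h
  obtain ⟨y, hy⟩ := hq _ hall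
  obtain ⟨b, hb, -⟩ := hy 0
  refine ⟨k, fun j => b * x j, fun j => m ⟨0, hu⟩ * y j, fun i => ?_, fun i => ?_⟩
  · refine ⟨m i * b, hb i, ?_⟩
    rw [mulVecQ_scale, hmx, PNat.mul_coe]
    push_cast
    ring
  · obtain ⟨b', hb', hby⟩ := hy i
    refine ⟨m ⟨0, hu⟩ * b', hb' _, ?_⟩
    rw [mulVecQ_scale, hby, PNat.mul_coe]
    push_cast
    ring
end

section
/- For each k ∈ ℕ let A_k = {x^k : x ∈ ℕ}. Then A_k is central* in (ℕ,·) if and only if k = 1. -/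
/-- A left ideal of `(βℕ,·)`: a nonempty set `L` with `βℕ · L ⊆ L`. -/
def IsLeftIdealMul (L : Set (Ultrafilter ℕ+)) : Prop :=
  L.Nonempty ∧ ∀ p q, q ∈ L → umul p q ∈ L

/-- A minimal left ideal of `(βℕ,·)`. -/
def IsMinimalLeftIdealMul (L : Set (Ultrafilter ℕ+)) : Prop :=
  IsLeftIdealMul L ∧ ∀ L', IsLeftIdealMul L' → L' ⊆ L → L' = L

/-- `K(βℕ,·)`, the union of all minimal left ideals of `(βℕ,·)`. -/
def KMul : Set (Ultrafilter ℕ+) :=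
  {p | ∃ L, IsMinimalLeftIdealMul L ∧ p ∈ L}

/-- `C ⊆ ℕ` is central in `(ℕ,·)`: `C` belongs to some idempotent of `K(βℕ,·)`. -/
def IsCentralMul (C : Set ℕ+) : Prop :=
  ∃ p : Ultrafilter ℕ+, umul p p = p ∧ p ∈ KMul ∧ C ∈ p

/-- `D` is central* in `(ℕ,·)`: `D` meets every multiplicatively central set. -/
def IsCentralStarMul (D : Set ℕ+) : Prop :=
  ∀ C : Set ℕ+, IsCentralMul C → (D ∩ C).Nonempty

attribute [local instance] Ultrafilter.mul Ultrafilter.semigroup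

theorem umul_eq_mul (p q : Ultrafilter ℕ+) : umul p q = p * q := by
  apply Ultrafilter.coe_inj.mp
  apply Filter.ext'
  intro P
  rfl

theorem exists_minimal_idem : ∃ p : Ultrafilter ℕ+, umul p p = p ∧ p ∈ KMul := by
  let S : Set (Set (Ultrafilter ℕ+)) := {L | IsClosed L ∧ IsLeftIdealMul L}
  have hz : ∃ L, Minimal (· ∈ S) L := by
    refine zorn_superset _ fun c hcs hc => ?_
    refine ⟨⋂₀ c, ⟨isClosed_sInter fun t ht => (hcs ht).1, ?_, fun p q hq => ?_⟩,
      fun s hs => Set.sInter_subset_of_mem hs⟩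
    · obtain rfl | hcnemp := c.eq_empty_or_nonempty
      · rw [Set.sInter_empty]
        exact Set.univ_nonempty
      rw [Set.sInter_eq_iInter]
      have := hcnemp.coe_sort
      refine IsCompact.nonempty_iInter_of_directed_nonempty_isCompact_isClosed
        ((↑) : c → Set (Ultrafilter ℕ+)) ?_ ?_ ?_ ?_
      · exact DirectedOn.directed_val (IsChain.directedOn hc.symm)
      exacts [fun i => (hcs i.prop).2.1, fun i => (hcs i.prop).1.isCompact,
        fun i => (hcs i.prop).1]
    · exact fun t ht => (hcs ht).2.2 p q (hq t ht)
  obtain ⟨L, hL⟩ := hz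
  have hLS : IsClosed L ∧ IsLeftIdealMul L := hL.prop
  obtain ⟨hcl, hne, hid⟩ := hLS
  obtain ⟨p, hp, hpp⟩ := exists_idempotent_in_compact_subsemigroup
    (Ultrafilter.continuous_mul_left (M := ℕ+)) L hne hcl.isCompact
    (fun x _ y hy => by rw [← umul_eq_mul]; exact hid x y hy)
  refine ⟨p, by rw [umul_eq_mul]; exact hpp, L, ⟨⟨hne, hid⟩, ?_⟩, hp⟩
  intro L' hL' hsub
  obtain ⟨⟨q, hq⟩, hid'⟩ := hL'
  have hR : Set.range (· * q) ∈ S := by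
    refine ⟨(isCompact_range (Ultrafilter.continuous_mul_left q)).isClosed, ⟨_, q, rfl⟩, ?_⟩
    rintro a _ ⟨b, rfl⟩
    exact ⟨a * b, by rw [umul_eq_mul]; exact mul_assoc a b q⟩
  have hRL' : Set.range (· * q) ⊆ L' := by
    rintro _ ⟨b, rfl⟩
    have := hid' b q hq
    rwa [umul_eq_mul] at this
  exact hsub.antisymm ((hL.2 hR (hRL'.trans hsub)).trans hRL')

theorem no_two (k : ℕ) (hk : 2 ≤ k) (g g' n : ℕ) (hn : n ≠ 0) (hg : g.Prime) (hg' : g'.Prime)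
    (hne : g ≠ g') (a b : ℕ) (h1 : g * n = a ^ k) (h2 : g' * n = b ^ k) : False := by
  have e1 := congrArg (fun m => m.factorization g) h1
  have e2 := congrArg (fun m => m.factorization g) h2
  simp only [Nat.factorization_mul hg.ne_zero hn, Nat.factorization_mul hg'.ne_zero hn,
    Nat.factorization_pow, Finsupp.add_apply, Finsupp.smul_apply, smul_eq_mul,
    hg.factorization_self] at e1 e2
  rw [Nat.factorization_eq_zero_of_not_dvd
    (fun h => hne ((Nat.prime_dvd_prime_iff_eq hg hg').mp h))] at e2
  have h : k ∣ 1 := by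
    have d2 : k ∣ n.factorization g := ⟨_, by rw [← e2]; ring⟩
    exact (Nat.dvd_add_left d2).mp ⟨_, e1⟩
  have := Nat.le_of_dvd one_pos h
  omega

theorem pow_not_mem (k : ℕ) (hk : 2 ≤ k) (p : Ultrafilter ℕ+) (hp : p ∈ KMul) :
    {z : ℕ+ | ∃ x : ℕ+, z = x ^ k} ∉ p := by
  intro hA
  obtain ⟨L, ⟨⟨_, hid⟩, hmin⟩, hpL⟩ := hp
  have hinf : {g : ℕ+ | (g : ℕ).Prime}.Infinite := by
    intro hf
    apply Nat.infinite_setOfPred_prime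
    refine (hf.image (fun g : ℕ+ => (g : ℕ))).subset ?_
    intro g hg
    exact ⟨⟨g, Nat.Prime.pos hg⟩, hg, rfl⟩
  have : (Filter.cofinite ⊓ Filter.principal {g : ℕ+ | (g : ℕ).Prime}).NeBot :=
    hinf.cofinite_inf_principal_neBot
  let q : Ultrafilter ℕ+ := Ultrafilter.of (Filter.cofinite ⊓ Filter.principal {g : ℕ+ | (g : ℕ).Prime})
  have hq : (q : Filter ℕ+) ≤ Filter.cofinite ⊓ Filter.principal {g : ℕ+ | (g : ℕ).Prime} :=
    Ultrafilter.of_le _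
  have hqp : ∀ᶠ g : ℕ+ in (q : Filter ℕ+), (g : ℕ).Prime :=
    Filter.le_principal_iff.mp (hq.trans inf_le_right)
  have hqc : ∀ x : ℕ+, ∀ᶠ g in (q : Filter ℕ+), g ≠ x := fun x =>
    (hq.trans inf_le_left) (Set.finite_singleton x).compl_mem_cofinite
  have hR : Set.range (· * (q * p)) = L := by
    apply hmin
    · refine ⟨⟨_, q, rfl⟩, ?_⟩
      rintro a _ ⟨b, rfl⟩
      exact ⟨a * b, by rw [umul_eq_mul]; exact mul_assoc a b _⟩
    · rintro _ ⟨b, rfl⟩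
      have := hid b _ (hid q p hpL)
      rwa [umul_eq_mul, umul_eq_mul] at this
  rw [← hR] at hpL
  obtain ⟨r, hr⟩ := hpL
  have hr : r * (q * p) = p := hr
  have h1 : ∀ᶠ z in ((r * (q * p) : Ultrafilter ℕ+) : Filter ℕ+), ∃ x : ℕ+, z = x ^ k := by
    rw [hr]; exact hA
  rw [Ultrafilter.eventually_mul] at h1
  obtain ⟨t, ht⟩ := h1.exists
  rw [Ultrafilter.eventually_mul] at ht
  obtain ⟨g, hg, hgP⟩ := (ht.and hqp).exists
  obtain ⟨g', ⟨hg', hgP'⟩, hne⟩ := ((ht.and hqp).and (hqc g)).exists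
  obtain ⟨x, ⟨a, ha⟩, ⟨b, hb⟩⟩ := (hg.and hg').exists
  have ha' := congrArg (fun z : ℕ+ => (z : ℕ)) ha
  have hb' := congrArg (fun z : ℕ+ => (z : ℕ)) hb
  simp only [PNat.mul_coe, PNat.pow_coe] at ha' hb'
  exact no_two k hk g g' (t * x) (by positivity) hgP hgP'
    (fun h => hne (PNat.coe_injective h.symm)) a b (by rw [← ha']; ring) (by rw [← hb']; ring)

/-- Lemma 3.4: for `k ∈ ℕ`, the set `A_k = {x^k : x ∈ ℕ}` is
central* in `(ℕ,·)` if and only if `k = 1`. -/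
theorem stmt_9 (k : ℕ) (hk : 0 < k) :
    IsCentralStarMul {z : ℕ+ | ∃ x : ℕ+, z = x ^ k} ↔ k = 1 := by
  constructor
  · intro h
    by_contra hk1
    obtain ⟨p, hpp, hpK⟩ := exists_minimal_idem
    have hn := pow_not_mem k (by omega) p hpK
    obtain ⟨z, hz, hz'⟩ := h _ ⟨p, hpp, hpK, Ultrafilter.compl_mem_iff_notMem.mpr hn⟩
    exact hz' hz
  · rintro rfl C ⟨p, _, _, hC⟩
    obtain ⟨z, hz⟩ := Ultrafilter.nonempty_of_mem hC
    exact ⟨z, ⟨z, by simp⟩, hz⟩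
end

section
/- Let m ∈ ℕ, for each i ∈ {1,…,m} let A_i be a u_i×v_i image partition regular matrix with u_i, v_i ∈ ℕ, and let B be any infinite (ω×ω, row-finite) image partition regular matrix. Let ℱ be the set of all finite image partition regular matrices with rational entries and I = ⋂_{A ∈ ℱ} I(A). If U ∈ p^m·q where p ∈ I, q ∈ I(B), and p^m denotes the m-fold product of p in (βℕ,·), then there exist x^(i) ∈ ℕ^{v_i} for 1 ≤ i ≤ m and x^(m+1) ∈ ℕ^ω such that P(A_1x^(1), A_2x^(2), …, A_mx^(m), Bx^(m+1)) ⊆ U. -/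
/-- `upow p m` is the `m`-fold product `p·p·…·p` in `(βℕ,·)` (for `m ≥ 1`). -/
def upow (p : Ultrafilter ℕ+) : ℕ → Ultrafilter ℕ+
  | 0 => p
  | 1 => p
  | n + 2 => umul (upow p (n + 1)) p

theorem mem_umul_iff (p q : Ultrafilter ℕ+) (U : Set ℕ+) :
    U ∈ umul p q ↔ {x | {y | x * y ∈ U} ∈ q} ∈ p := Iff.rfl

/-- One step: append one matrix on the right. -/
theorem step_umul (m : ℕ) (u v : Fin m → ℕ) (A : ∀ i, Fin (u i) → Fin (v i) → ℚ)
    (s q : Ultrafilter ℕ+)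
    (hs : ∀ U ∈ s, ∃ x : ∀ i, Fin (v i) → ℕ+, ∀ f : ∀ i, Fin (u i), ∃ n ∈ U,
      (∏ i, mulVecQ (A i) (x i) (f i)) = ((n : ℕ) : ℚ))
    {ι κ : Type} (C : ι → κ → ℚ) (hq : q ∈ ISet C) (U : Set ℕ+) (hU : U ∈ umul s q) :
    ∃ (x : ∀ i, Fin (v i) → ℕ+) (x' : κ → ℕ+),
      ∀ (f : ∀ i, Fin (u i)) (i' : ι), ∃ n ∈ U,
        (∏ i, mulVecQ (A i) (x i) (f i)) * mulVecQ C x' i' = ((n : ℕ) : ℚ) := by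
  rw [mem_umul_iff] at hU
  obtain ⟨x, hx⟩ := hs _ hU
  choose n hn hne using hx
  have hmem : (⋂ f, {y | n f * y ∈ U}) ∈ (q : Filter ℕ+) :=
    Filter.iInter_mem.2 fun f => hn f
  obtain ⟨x', hx'⟩ := hq _ hmem
  refine ⟨x, x', fun f i' => ?_⟩
  obtain ⟨k, hk, hke⟩ := hx' i'
  refine ⟨n f * k, Set.mem_iInter.1 hk f, ?_⟩
  rw [hne, hke]
  push_cast
  rfl

theorem upow_aux (p : Ultrafilter ℕ+)
    (hp : ∀ (u' v' : ℕ) (C : Fin u' → Fin v' → ℚ), IPR C → p ∈ ISet C) (k : ℕ) :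
    ∀ (u v : Fin (k + 1) → ℕ) (A : ∀ i, Fin (u i) → Fin (v i) → ℚ), (∀ i, IPR (A i)) →
    ∀ U ∈ upow p (k + 1), ∃ x : ∀ i, Fin (v i) → ℕ+, ∀ f : ∀ i, Fin (u i), ∃ n ∈ U,
      (∏ i, mulVecQ (A i) (x i) (f i)) = ((n : ℕ) : ℚ) := by
  induction k with
  | zero =>
    intro u v A hA U hU
    obtain ⟨x, hx⟩ := hp _ _ (A 0) (hA 0) U hU
    refine ⟨Fin.cons x (fun i => i.elim0), fun f => ?_⟩
    obtain ⟨n, hn, he⟩ := hx (f 0)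
    exact ⟨n, hn, by simpa using he⟩
  | succ k ih =>
    intro u v A hA U hU
    obtain ⟨x, x', h⟩ := step_umul (k + 1) _ _ (fun i => A i.castSucc) (upow p (k + 1)) p
      (ih _ _ _ fun i => hA i.castSucc) (A (Fin.last _)) (hp _ _ _ (hA _)) U hU
    refine ⟨Fin.snoc (α := fun i => Fin (v i) → ℕ+) x x', fun f => ?_⟩
    obtain ⟨n, hn, he⟩ := h (fun i => f i.castSucc) (f (Fin.last _))
    refine ⟨n, hn, ?_⟩
    rw [Fin.prod_univ_castSucc]
    simpa only [Fin.snoc_castSucc, Fin.snoc_last] using he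

/-- Lemma 3.12: let `A 0, …, A (m-1)` be finite image partition
regular matrices and `B` an infinite (`ω×ω`, row-finite) image partition regular
matrix.  If `U ∈ p^m · q` with `p ∈ I = ⋂_{A ∈ ℱ} I(A)` and `q ∈ I(B)`, then
there are `x i ∈ ℕ^{v i}` and `x' ∈ ℕ^ω` with
`P(A 0 (x 0), …, A (m-1) (x (m-1)), B x') ⊆ U`. -/
theorem stmt_14 (m : ℕ) (hm : 0 < m) (u v : Fin m → ℕ)
    (A : ∀ i, Fin (u i) → Fin (v i) → ℚ) (hA : ∀ i, IPR (A i))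
    (B : ℕ → ℕ → ℚ) (hBrow : ∀ i, {j | B i j ≠ 0}.Finite) (hB : IPR B)
    (p q : Ultrafilter ℕ+)
    (hp : ∀ (u' v' : ℕ) (C : Fin u' → Fin v' → ℚ), IPR C → p ∈ ISet C)
    (hq : q ∈ ISet B)
    (U : Set ℕ+) (hU : U ∈ umul (upow p m) q) :
    ∃ (x : ∀ i, Fin (v i) → ℕ+) (x' : ℕ → ℕ+),
      ∀ (f : ∀ i, Fin (u i)) (i' : ℕ), ∃ n ∈ U,
        (∏ i, mulVecQ (A i) (x i) (f i)) * mulVecQ B x' i' = ((n : ℕ) : ℚ) := by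
  obtain ⟨k, rfl⟩ : ∃ k, m = k + 1 := ⟨m - 1, by omega⟩
  exact step_umul (k + 1) u v A (upow p (k + 1)) q (upow_aux p hp k u v A hA) B hq U hU
end
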